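/- Monotonicity in α: for positive semidefinite matrices A ≠ 0 and B with ker B ⊆ ker A, and for λ ≥ 0, the map α ↦ D_{α,λ}(A‖B) is monotonically increasing on (1,∞). -/

import Mathlib

/-!
Write `s = (α - 1) / α ∈ (0, 1)` and `C = B + λI`, and factor `A = RᴴR`. The matrices
`C^(-s/2) A C^(-s/2)` and `X_α = R C^(-s) Rᴴ` have the same characteristic polynomial
(`trace_mpow_star_mul_comm`), so the divergence is governed by `tr X_α ^ α`.

Choose an orthonormal eigenbasis `V` of `X_α₁` and an eigenbasis `U` of `C` with eigenvalues `m`.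
The diagonal entries of `X_α` in the basis `V` are `∑ i, m i ^ (-s) * w i j` with weights
`w i j = (Uᴴ Rᴴ V) i j ^ 2` independent of `α` and of total mass `tr A`. They are the eigenvalues
for `α = α₁`, while for `α = α₂` Peierls' inequality (`sum_diag_rpow_le`) bounds the sum of their
`α₂`-th powers by `tr X_α₂ ^ α₂`.

What remains (`log_mono_core`) is a commutative inequality. For a probability vector `t` put
`E s = ∑ i j, w i j * (t j / m i) ^ s`. By Hölder, `E s₂ ≤ (tr X_α₂ ^ α₂) ^ (1 / α₂)`, and for `t`
proportional to the `α₁`-th powers of the eigenvalues of `X_α₁` one has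
`E s₁ = (tr X_α₁ ^ α₁) ^ (1 / α₁)`. Jensen's inequality says that `(1 / s) log (E s / tr A)` is
nondecreasing in `s`, and the divergence is `(1 / s) log (E / tr A) + log tr A`, with
`E = (tr X_α ^ α) ^ (1 / α)`.

The kernel condition ensures `tr X_α₁ ^ α₁ > 0`, so that the logarithm is not the junk value `log 0`.
Since `0 ^ r = 0` for `r ≠ 0`, negative powers of a singular `C` are powers of its pseudo-inverse.
-/

open Matrix

noncomputable def mpow {m : Type*} [Fintype m] [DecidableEq m] (A : Matrix m m ℝ) (r : ℝ) :
    Matrix m m ℝ :=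
  if hA : A.IsHermitian then
    (hA.eigenvectorUnitary : Matrix m m ℝ) *
      Matrix.diagonal (fun i => (hA.eigenvalues i : ℝ) ^ r) *
      star (hA.eigenvectorUnitary : Matrix m m ℝ)
  else 0

/-- Sandwiched quantum Rényi divergence of order `α`. -/
noncomputable def sandwichedRenyi {m : Type*} [Fintype m] [DecidableEq m]
    (α : ℝ) (A B : Matrix m m ℝ) : ℝ :=
  (α - 1)⁻¹ *
    Real.log ((mpow (mpow B ((1 - α) / (2 * α)) * A * mpow B ((1 - α) / (2 * α))) α).trace
      / A.trace)

/-- Regularized sandwiched quantum Rényi divergence `D_{α,λ}(A‖B) := D_α(A‖B + λI)`. -/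
noncomputable def regRenyi {m : Type*} [Fintype m] [DecidableEq m]
    (α lam : ℝ) (A B : Matrix m m ℝ) : ℝ :=
  sandwichedRenyi α A (B + lam • 1)

section Helpers

/-! ### Real powers of symmetric matrices -/

variable {n : Type*} [Fintype n] [DecidableEq n]

theorem mpow_of_isHermitian {A : Matrix n n ℝ} (hA : A.IsHermitian) (r : ℝ) :
    mpow A r = (hA.eigenvectorUnitary : Matrix n n ℝ) *
      Matrix.diagonal (fun i => (hA.eigenvalues i : ℝ) ^ r) *
      star (hA.eigenvectorUnitary : Matrix n n ℝ) := by
  rw [mpow, dif_pos hA]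

theorem star_mpow (A : Matrix n n ℝ) (r : ℝ) : star (mpow A r) = mpow A r := by
  unfold mpow
  split_ifs with hA
  · simp [mul_assoc, star_eq_conjTranspose]
  · simp

theorem trace_mpow {A : Matrix n n ℝ} (hA : A.IsHermitian) (r : ℝ) :
    (mpow A r).trace = ∑ i, hA.eigenvalues i ^ r := by
  rw [mpow_of_isHermitian hA, trace_mul_cycle]
  simp [trace_diagonal]

/-- The trace of a power depends only on the characteristic polynomial, which is the same for
`MᴴM` and `MMᴴ`. -/
theorem trace_mpow_star_mul_comm (M : Matrix n n ℝ) (r : ℝ) :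
    (mpow (star M * M) r).trace = (mpow (M * star M) r).trace := by
  have key : ∀ {A : Matrix n n ℝ} (_ : A.IsHermitian),
      (mpow A r).trace = (A.charpoly.roots.map (fun x => x ^ r)).sum := by
    intro A hA
    rw [trace_mpow hA, hA.roots_charpoly_eq_eigenvalues, Multiset.map_map]
    rfl
  rw [key (A := star M * M) (isHermitian_conjTranspose_mul_self M),
    key (A := M * star M) (isHermitian_mul_conjTranspose_self M),
    charpoly_mul_comm]

/-- Diagonal entries of `V* (XᴴX) V` for `X = C^a S`, expanded in the eigenbasis of `C`. -/
theorem diag_conj_mpow {C : Matrix n n ℝ} (hC : C.IsHermitian) (a : ℝ) (S V : Matrix n n ℝ)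
    (j : n) :
    (star V * (star (mpow C a * S) * (mpow C a * S)) * V) j j =
      ∑ i, (hC.eigenvalues i ^ a) ^ 2 *
        (star (hC.eigenvectorUnitary : Matrix n n ℝ) * S * V) i j ^ 2 := by
  set U := (hC.eigenvectorUnitary : Matrix n n ℝ) with hU
  have hUU : star U * U = 1 := by simp [hU]
  set D := Matrix.diagonal (fun i => (hC.eigenvalues i : ℝ) ^ a) with hD
  have hDs : star D = D := by simp [hD, star_eq_conjTranspose]
  have h : star V * (star (mpow C a * S) * (mpow C a * S)) * V
      = star (D * (star U * S * V)) * (D * (star U * S * V)) := by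
    rw [mpow_of_isHermitian hC, ← hU, ← hD]
    simp only [star_mul, star_star, hDs, mul_assoc]
    rw [← mul_assoc (star U) U, hUU, one_mul]
  rw [h, mul_apply]
  refine Finset.sum_congr rfl fun i _ => ?_
  rw [star_apply, hD, diagonal_mul]
  simp
  ring

/-- Peierls' inequality for `x ↦ x ^ p`: the diagonal entries in any orthonormal basis are averages
of the eigenvalues with doubly stochastic weights. -/
theorem sum_diag_rpow_le {X : Matrix n n ℝ} (hX : X.PosSemidef) {V : Matrix n n ℝ}
    (hV : star V * V = 1) {p : ℝ} (hp : 1 ≤ p) :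
    ∑ j, ((star V * X * V) j j) ^ p ≤ (mpow X p).trace := by
  set U := (hX.1.eigenvectorUnitary : Matrix n n ℝ) with hU
  have hUU : star U * U = 1 := by simp [hU]
  have hUU' : U * star U = 1 := by simp [hU]
  set P := star U * V with hP
  have hPP : star P * P = 1 := by
    rw [hP, star_mul, star_star, mul_assoc, ← mul_assoc U, hUU', one_mul, hV]
  have hPP' : P * star P = 1 := mul_eq_one_comm.mp hPP
  have hcol : ∀ j, ∑ i, P i j ^ 2 = 1 := by
    intro j
    have := congrFun (congrFun hPP j) j
    simpa [mul_apply, star_apply, sq] using this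
  have hrow : ∀ i, ∑ j, P i j ^ 2 = 1 := by
    intro i
    have := congrFun (congrFun hPP' i) i
    simpa [mul_apply, star_apply, sq] using this
  have hdiag : ∀ j, (star V * X * V) j j = ∑ i, P i j ^ 2 * hX.1.eigenvalues i := by
    intro j
    have hs : X = U * Matrix.diagonal hX.1.eigenvalues * star U := by
      have := hX.1.spectral_theorem
      rw [Unitary.conjStarAlgAut_apply] at this
      exact this
    have h : star V * X * V = star P * (Matrix.diagonal hX.1.eigenvalues * P) := by
      conv_lhs => rw [hs]
      rw [hP, star_mul, star_star]
      simp only [mul_assoc]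
    rw [h, mul_apply]
    refine Finset.sum_congr rfl fun i _ => ?_
    rw [star_apply, diagonal_mul]
    simp
    ring
  rw [trace_mpow hX.1]
  calc ∑ j, ((star V * X * V) j j) ^ p
      ≤ ∑ j, ∑ i, P i j ^ 2 * hX.1.eigenvalues i ^ p := by
        refine Finset.sum_le_sum fun j _ => ?_
        rw [hdiag]
        exact Real.rpow_arith_mean_le_arith_mean_rpow _ _ _ (fun i _ => sq_nonneg _) (hcol j)
          (fun i _ => hX.eigenvalues_nonneg i) hp
    _ = ∑ i, hX.1.eigenvalues i ^ p := by
        rw [Finset.sum_comm]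
        refine Finset.sum_congr rfl fun i _ => ?_
        rw [← Finset.sum_mul, hrow, one_mul]

/-! ### The commutative inequality -/

/-- The commutative core of the argument. With `s = (α - 1) / α`, the quantity
`Q₁ ^ (1 / α₁)` is attained by a probability vector `t` in the dual description of the `α₁`-norm.
The same `t` is a competitor for `α₂`, and for fixed `t` only monotonicity of power means in `s`
remains. -/
theorem log_mono_core {w : n → n → ℝ} (hw : ∀ i j, 0 ≤ w i j) {m : n → ℝ} (hm : ∀ i, 0 ≤ m i)
    {α₁ α₂ T Q₁ Q₂ : ℝ} (h1 : 1 < α₁) (h12 : α₁ ≤ α₂)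
    (hT : ∑ j, ∑ i, w i j = T) (hT0 : 0 < T)
    (hQ₁ : ∑ j, (∑ i, m i ^ ((1 - α₁) / α₁) * w i j) ^ α₁ = Q₁) (hQ₁0 : 0 < Q₁)
    (hQ₂ : ∑ j, (∑ i, m i ^ ((1 - α₂) / α₂) * w i j) ^ α₂ ≤ Q₂) :
    (α₁ - 1)⁻¹ * Real.log (Q₁ / T) ≤ (α₂ - 1)⁻¹ * Real.log (Q₂ / T) := by
  have h2 : 1 < α₂ := lt_of_lt_of_le h1 h12
  have hα₁ : 0 < α₁ := by linarith
  have hα₂ : 0 < α₂ := by linarith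
  set s₁ := (α₁ - 1) / α₁ with hs₁
  set s₂ := (α₂ - 1) / α₂ with hs₂
  have hs₁0 : 0 < s₁ := div_pos (by linarith) hα₁
  have hs₂0 : 0 < s₂ := div_pos (by linarith) hα₂
  have hs12 : s₁ ≤ s₂ := by
    rw [hs₁, hs₂, div_le_div_iff₀ hα₁ hα₂]; nlinarith
  have e₁ : (1 - α₁) / α₁ = -s₁ := by rw [hs₁]; ring
  have e₂ : (1 - α₂) / α₂ = -s₂ := by rw [hs₂]; ring
  rw [e₁] at hQ₁
  rw [e₂] at hQ₂
  have hnn : ∀ (s : ℝ) (j : n), 0 ≤ ∑ i, m i ^ (-s) * w i j := fun s j =>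
    Finset.sum_nonneg fun i _ => mul_nonneg (Real.rpow_nonneg (hm i) _) (hw i j)
  set x : n → ℝ := fun j => ∑ i, m i ^ (-s₁) * w i j with hx
  set d : n → ℝ := fun j => ∑ i, m i ^ (-s₂) * w i j with hd
  have hx0 : ∀ j, 0 ≤ x j := hnn s₁
  have hd0 : ∀ j, 0 ≤ d j := hnn s₂
  -- The optimal dual vector for the exponent `α₁`.
  set t : n → ℝ := fun j => x j ^ α₁ / Q₁ with ht
  have ht0 : ∀ j, 0 ≤ t j := fun j => div_nonneg (Real.rpow_nonneg (hx0 j) _) hQ₁0.le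
  have htsum : ∑ j, t j = 1 := by
    rw [ht, ← Finset.sum_div, hQ₁, div_self hQ₁0.ne']
  set E : ℝ → ℝ := fun s => ∑ j, ∑ i, w i j * ((m i)⁻¹ * t j) ^ s with hE
  have hEs : ∀ s, E s = ∑ j, (∑ i, m i ^ (-s) * w i j) * t j ^ s := by
    intro s
    refine Finset.sum_congr rfl fun j _ => ?_
    rw [Finset.sum_mul]
    refine Finset.sum_congr rfl fun i _ => ?_
    rw [Real.mul_rpow (inv_nonneg.mpr (hm i)) (ht0 j), Real.inv_rpow (hm i),
      Real.rpow_neg (hm i)]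
    ring
  have hE1 : E s₁ = Q₁ ^ (1 / α₁) := by
    have h : ∀ j, x j * t j ^ s₁ = x j ^ α₁ / Q₁ ^ s₁ := by
      intro j
      rw [ht]
      simp only
      rw [Real.div_rpow (Real.rpow_nonneg (hx0 j) _) hQ₁0.le, ← Real.rpow_mul (hx0 j)]
      have : α₁ * s₁ = α₁ - 1 := by rw [hs₁]; field_simp
      rw [this]
      rcases (hx0 j).eq_or_lt with h0 | h0
      · rw [← h0, Real.zero_rpow hα₁.ne']; simp
      · rw [Real.rpow_sub_one h0.ne']; field_simp
    rw [hEs, Finset.sum_congr rfl fun j _ => h j, ← Finset.sum_div, hQ₁]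
    have : 1 / α₁ = 1 - s₁ := by rw [hs₁]; field_simp; ring
    rw [this, Real.rpow_sub hQ₁0, Real.rpow_one]
  have hE2 : E s₂ ≤ Q₂ ^ (1 / α₂) := by
    rw [hEs]
    have hconj : α₂.HolderConjugate (1 / s₂) := by
      rw [Real.holderConjugate_iff]
      refine ⟨h2, ?_⟩
      rw [hs₂]; field_simp; ring
    have := Real.inner_le_Lp_mul_Lq_of_nonneg Finset.univ (f := d) (g := fun j => t j ^ s₂) hconj
      (fun j _ => hd0 j) (fun j _ => Real.rpow_nonneg (ht0 j) _)
    have h : ∑ j, (t j ^ s₂) ^ (1 / s₂) = 1 := by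
      refine (Finset.sum_congr rfl fun j _ => ?_).trans htsum
      rw [← Real.rpow_mul (ht0 j), mul_one_div_cancel hs₂0.ne', Real.rpow_one]
    rw [h, Real.one_rpow, mul_one] at this
    refine this.trans ?_
    exact Real.rpow_le_rpow (Finset.sum_nonneg fun j _ => Real.rpow_nonneg (hd0 j) _) hQ₂
      (by positivity)
  have hr0 : ∀ i j, 0 ≤ (m i)⁻¹ * t j := fun i j => mul_nonneg (inv_nonneg.mpr (hm i)) (ht0 j)
  have hE10 : 0 < E s₁ := by rw [hE1]; positivity
  have hjen : (E s₁ / T) ^ (s₂ / s₁) ≤ E s₂ / T := by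
    have := Real.rpow_arith_mean_le_arith_mean_rpow (Finset.univ : Finset (n × n))
      (fun q => w q.2 q.1 / T) (fun q => ((m q.2)⁻¹ * t q.1) ^ s₁)
      (fun q _ => div_nonneg (hw _ _) hT0.le)
      (by rw [← Finset.sum_div, Fintype.sum_prod_type, hT, div_self hT0.ne'])
      (fun q _ => Real.rpow_nonneg (hr0 _ _) _) (p := s₂ / s₁) ((one_le_div hs₁0).mpr hs12)
    have c : ∀ q : n × n, (((m q.2)⁻¹ * t q.1) ^ s₁) ^ (s₂ / s₁) = ((m q.2)⁻¹ * t q.1) ^ s₂ := by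
      intro q
      rw [← Real.rpow_mul (hr0 _ _), mul_div_cancel₀ _ hs₁0.ne']
    simp only [c, div_mul_eq_mul_div] at this
    rw [← Finset.sum_div, ← Finset.sum_div, Fintype.sum_prod_type, Fintype.sum_prod_type] at this
    exact this
  have hE1T : 0 < E s₁ / T := div_pos hE10 hT0
  have hE2T : 0 < E s₂ / T := lt_of_lt_of_le (Real.rpow_pos_of_pos hE1T _) hjen
  have hE20 : 0 < E s₂ := by simpa [hT0] using (div_pos_iff_of_pos_right hT0).mp hE2T
  have hQ₂0 : 0 < Q₂ := by
    have hnonneg : 0 ≤ Q₂ :=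
      (Finset.sum_nonneg fun j _ => Real.rpow_nonneg (hd0 j) _).trans hQ₂
    refine lt_of_le_of_ne hnonneg fun h => ?_
    rw [← h, Real.zero_rpow (by positivity)] at hE2
    linarith
  have l1 : Real.log (E s₁) = (1 / α₁) * Real.log Q₁ := by rw [hE1, Real.log_rpow hQ₁0]
  have l2 : Real.log (E s₂) ≤ (1 / α₂) * Real.log Q₂ := by
    rw [← Real.log_rpow hQ₂0]; exact Real.log_le_log hE20 hE2
  have l3 : (s₂ / s₁) * (Real.log (E s₁) - Real.log T) ≤ Real.log (E s₂) - Real.log T := by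
    rw [← Real.log_div hE10.ne' hT0.ne', ← Real.log_div hE20.ne' hT0.ne', ← Real.log_rpow hE1T]
    exact Real.log_le_log (Real.rpow_pos_of_pos hE1T _) hjen
  have l4 : (Real.log (E s₁) - Real.log T) / s₁ ≤ (Real.log (E s₂) - Real.log T) / s₂ := by
    rw [le_div_iff₀ hs₂0]
    calc _ = (s₂ / s₁) * (Real.log (E s₁) - Real.log T) := by ring
      _ ≤ _ := l3
  have l5 : (Real.log (E s₂) - Real.log T) / s₂ ≤ ((1 / α₂) * Real.log Q₂ - Real.log T) / s₂ :=
    div_le_div_of_nonneg_right (by linarith) hs₂0.le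
  have f : ∀ {α : ℝ} (q : ℝ), 1 < α → (α - 1)⁻¹ * (q - Real.log T) =
      ((1 / α) * q - Real.log T) / ((α - 1) / α) + Real.log T := by
    intro α q h
    have : α - 1 ≠ 0 := by linarith
    have : α ≠ 0 := by linarith
    field_simp
    ring
  rw [Real.log_div hQ₁0.ne' hT0.ne', Real.log_div hQ₂0.ne' hT0.ne', f _ h1, f _ h2, ← hs₁, ← hs₂]
  rw [l1] at l4
  linarith

/-! ### Monotonicity of the sandwiched divergence -/

/-- Monotonicity for a positive semidefinite second argument whose kernel is contained in
that of the first. -/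
theorem sandwichedRenyi_mono_alpha {A C : Matrix n n ℝ} (hA : A.PosSemidef) (hA0 : A ≠ 0)
    (hC : C.PosSemidef) (hker : ∀ v, C *ᵥ v = 0 → A *ᵥ v = 0)
    {α₁ α₂ : ℝ} (h1 : 1 < α₁) (h12 : α₁ ≤ α₂) :
    sandwichedRenyi α₁ A C ≤ sandwichedRenyi α₂ A C := by
  have h2 : 1 < α₂ := lt_of_lt_of_le h1 h12
  obtain ⟨R, hR⟩ : ∃ R : Matrix n n ℝ, A = star R * R := by
    open scoped MatrixOrder in
    exact CStarAlgebra.nonneg_iff_eq_star_mul_self.mp hA.nonneg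
  set M : ℝ → Matrix n n ℝ := fun α => mpow C ((1 - α) / (2 * α)) * star R with hM
  -- Replace `MMᴴ = C^a A C^a` by `MᴴM = R C^(2a) Rᴴ`, in which the power of `C` is adjacent
  -- to itself.
  have hQ : ∀ α, (mpow (mpow C ((1 - α) / (2 * α)) * A * mpow C ((1 - α) / (2 * α))) α).trace
      = (mpow (star (M α) * M α) α).trace := by
    intro α
    rw [trace_mpow_star_mul_comm]
    simp only [hM, star_mul, star_star, star_mpow, hR, mul_assoc]
  have hX : ∀ α, (star (M α) * M α).PosSemidef := fun α => posSemidef_conjTranspose_mul_self _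
  set V := ((hX α₁).1.eigenvectorUnitary : Matrix n n ℝ) with hV
  have hVV : star V * V = 1 := by simp [hV]
  have hVV' : V * star V = 1 := by simp [hV]
  set U := (hC.1.eigenvectorUnitary : Matrix n n ℝ) with hU
  have hUU' : U * star U = 1 := by simp [hU]
  set w : n → n → ℝ := fun i j => (star U * star R * V) i j ^ 2 with hw
  set m := hC.1.eigenvalues with hm
  have hm0 : ∀ i, 0 ≤ m i := hC.eigenvalues_nonneg
  have hdiag : ∀ α, 1 < α → ∀ j,
      (star V * (star (M α) * M α) * V) j j = ∑ i, m i ^ ((1 - α) / α) * w i j := by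
    intro α hα j
    rw [hM, diag_conj_mpow hC.1]
    refine Finset.sum_congr rfl fun i _ => ?_
    rw [← Real.rpow_natCast (_ ^ _), ← Real.rpow_mul (hm0 i)]
    congr 2
    have : α ≠ 0 := by linarith
    push_cast
    field_simp
  have hT : ∑ j, ∑ i, w i j = A.trace := by
    have : star (star U * star R * V) * (star U * star R * V) = star V * (R * star R) * V := by
      simp only [star_mul, star_star, mul_assoc]
      rw [← mul_assoc U, hUU', one_mul]
    have h3 : (star V * (R * star R) * V).trace = A.trace := by
      rw [trace_mul_cycle, hVV', one_mul, trace_mul_comm, hR]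
    rw [← h3, ← this, hw]
    generalize star U * star R * V = N
    simp [trace, mul_apply, star_apply, sq]
  have hT0 : 0 < A.trace :=
    lt_of_le_of_ne hA.trace_nonneg fun h => hA0 (hA.trace_eq_zero_iff.mp h.symm)
  have hxd : ∀ j, (hX α₁).1.eigenvalues j = (star V * (star (M α₁) * M α₁) * V) j j := by
    intro j
    have h := (hX α₁).1.spectral_theorem
    rw [Unitary.conjStarAlgAut_apply, ← hV] at h
    change _ = V * diagonal (hX α₁).1.eigenvalues * star V at h
    have h' : star V * (star (M α₁) * M α₁) * V
        = diagonal (hX α₁).1.eigenvalues := by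
      conv_lhs => rw [h]
      simp only [mul_assoc]
      rw [hVV, mul_one, ← mul_assoc, hVV, one_mul]
    rw [h']
    simp
  have hw0 : ∀ i j, 0 ≤ w i j := fun i j => sq_nonneg _
  -- On `ker C` the matrix `R` vanishes, since `A = RᴴR` does.
  have hwker : ∀ i j, m i = 0 → w i j = 0 := by
    intro i j hi
    have hc : C *ᵥ (hC.1.eigenvectorBasis i).ofLp = 0 := by
      rw [hC.1.mulVec_eigenvectorBasis, ← hm, hi, zero_smul]
    have hr : R *ᵥ (U *ᵥ Pi.single i 1) = 0 := by
      rw [hU, hC.1.eigenvectorUnitary_mulVec]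
      have := hker _ hc
      rw [hR] at this
      exact (conjTranspose_mul_self_mulVec_eq_zero R _).mp this
    have hr' : ∀ k, (R * U) k i = 0 := by
      intro k
      have := congrFun hr k
      rw [mulVec_mulVec, mulVec_single_one] at this
      exact this
    have : (star U * star R * V) i j = 0 := by
      rw [← star_mul, mul_apply]
      refine Finset.sum_eq_zero fun k _ => ?_
      rw [star_apply, hr' k]; simp
    simp [hw, this]
  have hQ1 : (mpow (star (M α₁) * M α₁) α₁).trace
      = ∑ j, (∑ i, m i ^ ((1 - α₁) / α₁) * w i j) ^ α₁ := by
    rw [trace_mpow (hX α₁).1]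
    refine Finset.sum_congr rfl fun j _ => ?_
    rw [hxd, hdiag α₁ h1]
  have hQ10 : 0 < (mpow (star (M α₁) * M α₁) α₁).trace := by
    rw [hQ1]
    obtain ⟨j, -, hj⟩ := Finset.exists_ne_zero_of_sum_ne_zero (hT ▸ hT0.ne')
    obtain ⟨i, -, hi⟩ := Finset.exists_ne_zero_of_sum_ne_zero hj
    have hmi : 0 < m i := lt_of_le_of_ne (hm0 i) fun h => hi (hwker i j h.symm)
    have hwi : 0 < w i j := lt_of_le_of_ne (hw0 i j) (Ne.symm hi)
    have hnn : ∀ i j, 0 ≤ m i ^ ((1 - α₁) / α₁) * w i j := fun i j =>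
      mul_nonneg (Real.rpow_nonneg (hm0 i) _) (hw0 i j)
    refine Finset.sum_pos' (fun j _ => Real.rpow_nonneg (Finset.sum_nonneg fun i _ => hnn i j) _)
      ⟨j, Finset.mem_univ _, Real.rpow_pos_of_pos ?_ _⟩
    exact Finset.sum_pos' (fun i _ => hnn i j) ⟨i, Finset.mem_univ _, by positivity⟩
  have hQ2 : ∑ j, (∑ i, m i ^ ((1 - α₂) / α₂) * w i j) ^ α₂
      ≤ (mpow (star (M α₂) * M α₂) α₂).trace := by
    refine le_trans (le_of_eq ?_) (sum_diag_rpow_le (hX α₂) hVV h2.le)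
    exact Finset.sum_congr rfl fun j _ => by rw [hdiag α₂ h2]
  rw [sandwichedRenyi, sandwichedRenyi, hQ, hQ]
  exact log_mono_core hw0 hm0 h1 h12 hT hT0 hQ1.symm hQ10 hQ2

end Helpers

/-- Monotonicity in `α` of the regularized quantum Rényi divergence on `(1,∞)`. -/
theorem regRenyi_mono_alpha {n : Type*} [Fintype n] [DecidableEq n]
    (A B : Matrix n n ℝ) (hA : A.PosSemidef) (hA0 : A ≠ 0) (hB : B.PosSemidef)
    (hker : ∀ v, B *ᵥ v = 0 → A *ᵥ v = 0)
    (lam : ℝ) (hlam : 0 ≤ lam)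
    (α₁ α₂ : ℝ) (h1 : 1 < α₁) (h12 : α₁ ≤ α₂) :
    regRenyi α₁ lam A B ≤ regRenyi α₂ lam A B := by
  refine sandwichedRenyi_mono_alpha hA hA0 (hB.add (PosSemidef.one.smul hlam)) ?_ h1 h12
  intro v hv
  rcases hlam.eq_or_lt with h | h
  · apply hker
    simpa [← h] using hv
  -- For `λ > 0` the matrix `B + λI` is positive definite, so its kernel is trivial.
  · have hpd : (B + lam • (1 : Matrix n n ℝ)).PosDef := PosDef.posSemidef_add hB (PosDef.one.smul h)
    have : v = 0 := by
      by_contra hv0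
      have := hpd.dotProduct_mulVec_pos hv0
      rw [hv] at this
      simp at this
    rw [this, mulVec_zero]
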